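/- Let A = ⟨Q,Σ⟩ be a PFA with |Q| = n and |Σ| = m, and let ℓ > 0. If A has a carefully synchronizing word of length ℓ, then the SAT instance (V,C) encoding (A,ℓ) is satisfiable, i.e., there exists a truth assignment φ : V → {0,1} satisfying every clause in C. -/

import Mathlib

open Set

/-- The extension of the transition function of a PFA (with states `Fin n` and letters
`Fin m`) to subsets of states and words: `δ(S,ε) = S`, `δ(S,va) = ⋃_{q ∈ δ(S,v)} δ(q,a)`. -/
def pfaExt {n m : ℕ} (δ : Fin n → Fin m → Option (Fin n))
    (S : Set (Fin n)) (w : List (Fin m)) : Set (Fin n) :=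
  w.foldl (fun T a => {p | ∃ q ∈ T, δ q a = some p}) S

/-- A nonempty word `w = a₁⋯a_ℓ` is carefully synchronizing for the PFA `δ` if (C1) its
first letter is defined at every state, (C2) for `1 < t ≤ ℓ` the letter `a_t` is defined
at every state of `δ(Q, a₁⋯a_{t-1})`, and (C3) `|δ(Q,w)| = 1`. -/
def CarefulSync {n m : ℕ} (δ : Fin n → Fin m → Option (Fin n)) (w : List (Fin m)) : Prop :=
  w ≠ [] ∧
  (∀ t : Fin w.length, ∀ q ∈ pfaExt δ Set.univ (w.take t.val), (δ q (w.get t)).isSome) ∧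
  (pfaExt δ Set.univ w).ncard = 1

/-- Boolean variables of the SAT instance encoding `(A, ℓ)`: letter variables `x i t`
(`1 ≤ i ≤ m`, `1 ≤ t ≤ ℓ`) and state variables `y j t` (`1 ≤ j ≤ n`, `0 ≤ t ≤ ℓ`). -/
inductive SatVar (n m ℓ : ℕ) : Type where
  | x : Fin m → Fin ℓ → SatVar n m ℓ
  | y : Fin n → Fin (ℓ + 1) → SatVar n m ℓ
deriving DecidableEq

/-- A literal: a variable together with a polarity (`true` = positive, `false` = negated). -/
abbrev SatLit (n m ℓ : ℕ) := SatVar n m ℓ × Bool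

/-- A clause is a disjunction of literals, represented as a list. -/
abbrev SatClause (n m ℓ : ℕ) := List (SatLit n m ℓ)

/-- A truth assignment satisfies a clause if it makes at least one of its literals true. -/
def SatisfiesClause {n m ℓ : ℕ} (φ : SatVar n m ℓ → Bool) (c : SatClause n m ℓ) : Prop :=
  ∃ l ∈ c, φ l.1 = l.2

/-- A truth assignment satisfies a set of clauses if it satisfies every clause in it. -/
def Satisfies {n m ℓ : ℕ} (φ : SatVar n m ℓ → Bool) (C : Set (SatClause n m ℓ)) : Prop :=
  ∀ c ∈ C, SatisfiesClause φ c

/-- The group `I` of initial clauses: the unit clauses `y_{j,0}` for `1 ≤ j ≤ n`. -/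
def clausesI (n m ℓ : ℕ) : Set (SatClause n m ℓ) :=
  {c | ∃ j : Fin n, c = [(SatVar.y j 0, true)]}

/-- The group `L` of letter clauses: for each `t`, the clause `x_{1,t} ∨ ⋯ ∨ x_{m,t}`
and the clauses `¬x_{r,t} ∨ ¬x_{s,t}` for `1 ≤ r < s ≤ m`. -/
def clausesL (n m ℓ : ℕ) : Set (SatClause n m ℓ) :=
  {c | ∃ t : Fin ℓ, c = (List.finRange m).map fun i => ((SatVar.x i t : SatVar n m ℓ), true)} ∪
  {c | ∃ t : Fin ℓ, ∃ r s : Fin m, r < s ∧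
    c = [(SatVar.x r t, false), (SatVar.x s t, false)]}

/-- The group `T` of transition clauses: for each `t` and each pair `(q_j, a_i)`, the
clause `¬y_{j,t-1} ∨ ¬x_{i,t} ∨ y_{k,t}` if `δ(q_j, a_i) = {q_k}`, and the clause
`¬y_{j,t-1} ∨ ¬x_{i,t}` if `δ(q_j, a_i)` is undefined. -/
def clausesT {n m : ℕ} (δ : Fin n → Fin m → Option (Fin n)) (ℓ : ℕ) :
    Set (SatClause n m ℓ) :=
  {c | ∃ (t : Fin ℓ) (j : Fin n) (i : Fin m) (k : Fin n), δ j i = some k ∧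
    c = [(SatVar.y j t.castSucc, false), (SatVar.x i t, false), (SatVar.y k t.succ, true)]} ∪
  {c | ∃ (t : Fin ℓ) (j : Fin n) (i : Fin m), δ j i = none ∧
    c = [(SatVar.y j t.castSucc, false), (SatVar.x i t, false)]}

/-- The group `S` of synchronization clauses: `¬y_{r,ℓ} ∨ ¬y_{s,ℓ}` for `1 ≤ r < s ≤ n`. -/
def clausesS (n m ℓ : ℕ) : Set (SatClause n m ℓ) :=
  {c | ∃ r s : Fin n, r < s ∧
    c = [(SatVar.y r (Fin.last ℓ), false), (SatVar.y s (Fin.last ℓ), false)]}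

/-- The set `C = I ∪ L ∪ T ∪ S` of clauses of the SAT instance encoding `(A, ℓ)`. -/
def encodingClauses {n m : ℕ} (δ : Fin n → Fin m → Option (Fin n)) (ℓ : ℕ) :
    Set (SatClause n m ℓ) :=
  clausesI n m ℓ ∪ clausesL n m ℓ ∪ clausesT δ ℓ ∪ clausesS n m ℓ

/-- If the PFA `A` (with `n ≥ 1` states and `m ≥ 1` letters) has a carefully
synchronizing word of length `ℓ > 0`, then the SAT instance encoding `(A, ℓ)` is
satisfiable. -/
theorem csw_imp_sat {n m ℓ : ℕ} (hn : 0 < n) (hm : 0 < m) (hℓ : 0 < ℓ)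
    (δ : Fin n → Fin m → Option (Fin n))
    (w : List (Fin m)) (hlen : w.length = ℓ) (hw : CarefulSync δ w) :
    ∃ φ : SatVar n m ℓ → Bool, Satisfies φ (encodingClauses δ ℓ) := by
  classical
  subst hlen
  obtain ⟨-, h2, h3⟩ := hw
  refine ⟨fun v => match v with
    | SatVar.x i t => decide (w.get t = i)
    | SatVar.y j t => decide (j ∈ pfaExt δ Set.univ (w.take t.val)), ?_⟩
  rintro c (((⟨j, rfl⟩ | (⟨t, rfl⟩ | ⟨t, r, s, hrs, rfl⟩)) |
    (⟨t, j, i, k, hk, rfl⟩ | ⟨t, j, i, hk, rfl⟩)) | ⟨r, s, hrs, rfl⟩)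
  · exact ⟨_, List.mem_singleton.2 rfl, by simp [pfaExt]⟩
  · exact ⟨(SatVar.x (w.get t) t, true), by simp, by simp⟩
  · by_cases h : w.get t = r
    · refine ⟨(SatVar.x s t, false), by simp, ?_⟩
      have : w.get t ≠ s := by rw [h]; exact hrs.ne
      exact decide_eq_false this
    · exact ⟨(SatVar.x r t, false), by simp, decide_eq_false h⟩
  · by_cases h : w.get t = i
    · by_cases hj : j ∈ pfaExt δ Set.univ (w.take t.val)
      · refine ⟨(SatVar.y k t.succ, true), by simp, ?_⟩
        apply decide_eq_true
        have e : w.take (t.val + 1) = w.take t.val ++ [w.get t] := by simp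
        rw [Fin.val_succ, e, h]
        unfold pfaExt at hj ⊢
        rw [List.foldl_append]
        exact ⟨j, hj, hk⟩
      · exact ⟨(SatVar.y j t.castSucc, false), by simp, decide_eq_false hj⟩
    · exact ⟨(SatVar.x i t, false), by simp, decide_eq_false h⟩
  · by_cases h : w.get t = i
    · refine ⟨(SatVar.y j t.castSucc, false), by simp, decide_eq_false fun hj => ?_⟩
      have := h2 t j hj
      rw [h, hk] at this
      simp at this
    · exact ⟨(SatVar.x i t, false), by simp, decide_eq_false h⟩
  · obtain ⟨a, ha⟩ := Set.ncard_eq_one.1 h3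
    by_cases h : r = a
    · refine ⟨(SatVar.y s (Fin.last _), false), by simp, decide_eq_false fun hj => ?_⟩
      rw [Fin.val_last, List.take_length, ha] at hj
      exact hrs.ne (h.trans hj.symm)
    · refine ⟨(SatVar.y r (Fin.last _), false), by simp, decide_eq_false fun hj => ?_⟩
      rw [Fin.val_last, List.take_length, ha] at hj
      exact h hj
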